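/- arXiv:2001.03865 — 3 statements merged into one kernel-verified Lean document; each statement's English description precedes it below -/
import Mathlib

section
/- Let μ₋, μ₊ ∈ M₅(ℂ) with det μ₋ = 1, let E ∈ M₅(ℂ) be an invertible diagonal matrix, and let S ∈ M₅(ℂ) be invertible with μ₋E = μ₊ES. Set R = S⁻¹. Let P₁ ∈ M₅(ℂ) be the matrix whose first four columns are the first four columns of μ₋ and whose fifth column is the fifth column of μ₊. Then det P₁ = R_{55}, the (5,5)-entry of R. -/
open Complex Matrix

noncomputable section

/-! Column `j` of `B * E`, where `E = diagonal d`, is `d j` times column `j` of `B`. Since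
`B * E = A * E * S⁻¹`, it is also `A` applied to column `j` of `E * S⁻¹`, whose `j`-th entry is
`d j * S⁻¹ j j`. By Cramer's rule, putting such a column in place of column `j` of `A` multiplies
`det A` by that entry, and the factor `d j` cancels. -/

theorem of_ite_lt_eq_updateCol_last {m R : Type*} {n : ℕ} (A B : Matrix m (Fin (n + 1)) R) :
    (of fun i (j : Fin (n + 1)) => if (j : ℕ) < n then A i j else B i j) =
      A.updateCol (Fin.last n) (B.col (Fin.last n)) := by
  ext i j
  cases j using Fin.lastCases <;> simp [Fin.castSucc_ne_last]

section

variable {n R : Type*} [Fintype n] [DecidableEq n] [CommRing R]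

theorem cramer_mulVec (A : Matrix n n R) (v : n → R) : A.cramer (A *ᵥ v) = A.det • v := by
  rw [cramer_eq_adjugate_mulVec, mulVec_mulVec, adjugate_mul, smul_mulVec, one_mulVec]

theorem det_updateCol_col_mul (A M : Matrix n n R) (j : n) :
    (A.updateCol j ((A * M).col j)).det = A.det * M j j :=
  congrFun (cramer_mulVec A (M.col j)) j

theorem col_mul_diagonal (B : Matrix n n R) (d : n → R) (j : n) :
    (B * diagonal d).col j = d j • B.col j := by
  ext i
  rw [col_apply, mul_diagonal, Pi.smul_apply, col_apply, smul_eq_mul, mul_comm]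

theorem detP1_eq_r55_general {A B S : Matrix n n R} {d : n → R} {j : n} (hd : IsRegular (d j))
    (hS : IsUnit S.det) (hrel : A * diagonal d = B * diagonal d * S) :
    (A.updateCol j (B.col j)).det = A.det * S⁻¹ j j := by
  have hB : B * diagonal d = A * (diagonal d * S⁻¹) := by
    rw [← Matrix.mul_assoc, hrel, mul_nonsing_inv_cancel_right _ _ hS]
  apply hd.left
  calc
    d j * (A.updateCol j (B.col j)).det
      = (A.updateCol j ((B * diagonal d).col j)).det := by
        rw [col_mul_diagonal, det_updateCol_smul]
    _ = A.det * (d j * S⁻¹ j j) := by rw [hB, det_updateCol_col_mul, diagonal_mul]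
    _ = d j * (A.det * S⁻¹ j j) := mul_left_comm _ _ _

end

/-- For Jost solutions related by `μ₋E = μ₊ES`, the matrix `P₁` with columns 1–4 from `μ₋`
and column 5 from `μ₊` has determinant equal to the `(5,5)` entry of `R = S⁻¹`. -/
theorem detP1_eq_r55 (μm μp : Matrix (Fin 5) (Fin 5) ℂ)
    (hμm : μm.det = 1)
    (d : Fin 5 → ℂ) (hd : ∀ i, d i ≠ 0)
    (S : Matrix (Fin 5) (Fin 5) ℂ) (hS : IsUnit S.det)
    (hrel : μm * Matrix.diagonal d = μp * Matrix.diagonal d * S)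
    (P₁ : Matrix (Fin 5) (Fin 5) ℂ)
    (hP₁ : P₁ = Matrix.of fun (i j : Fin 5) => if (j : ℕ) < 4 then μm i j else μp i j) :
    P₁.det = S⁻¹ 4 4 := by
  have hP : P₁ = μm.updateCol 4 (μp.col 4) := hP₁.trans (of_ite_lt_eq_updateCol_last μm μp)
  rw [hP, detP1_eq_r55_general (.of_ne_zero (hd 4)) hS hrel, hμm, one_mul]
end
end

section
/- Let μ₋, μ₊ ∈ M₅(ℂ) be invertible with det μ₋ = 1, let E ∈ M₅(ℂ) be an invertible diagonal matrix, and let S ∈ M₅(ℂ) satisfy μ₋E = μ₊ES. Let P₂ ∈ M₅(ℂ) be the matrix whose first four rows are the first four rows of μ₋⁻¹ and whose fifth row is the fifth row of μ₊⁻¹. Then det P₂ = S_{55}, the (5,5)-entry of S. -/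
open Complex Matrix

noncomputable section

/-! Each row of `μ₊⁻¹ = (μ₊⁻¹ μ₋) μ₋⁻¹` is a combination of the rows of `μ₋⁻¹`, with coefficients
from the same row of `μ₊⁻¹ μ₋`. Since the determinant is multilinear and alternating in the rows,
replacing row `i` of `μ₋⁻¹` by that of `μ₊⁻¹` multiplies the determinant by `(μ₊⁻¹ μ₋)ᵢᵢ`.
Finally `μ₊⁻¹ μ₋ = E S E⁻¹` with `E` diagonal, so this factor is `Sᵢᵢ`. -/

theorem of_ite_val_lt_eq_updateRow_last {n : ℕ} {m α : Type*} (A B : Matrix (Fin (n + 1)) m α) :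
    (of fun (i : Fin (n + 1)) j => if (i : ℕ) < n then A i j else B i j) =
      A.updateRow (Fin.last n) (B (Fin.last n)) := by
  ext i j
  cases i using Fin.lastCases <;> simp [updateRow_apply, Fin.castSucc_ne_last]

theorem apply_self_eq_of_mul_diagonal_eq_diagonal_mul {n R : Type*} [Fintype n] [DecidableEq n]
    [NonUnitalNonAssocCommSemiring R] {X S : Matrix n n R} {d : n → R}
    (h : X * diagonal d = diagonal d * S) {i : n} (hd : IsLeftRegular (d i)) :
    X i i = S i i := by
  apply hd
  calc d i * X i i = (X * diagonal d) i i := by rw [mul_diagonal, mul_comm]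
    _ = d i * S i i := by rw [h, diagonal_mul]

section

variable {n R : Type*} [Fintype n] [DecidableEq n] [CommRing R]

theorem det_updateRow_vecMul (A : Matrix n n R) (i : n) (c : n → R) :
    (A.updateRow i (c ᵥ* A)).det = c i * A.det := by
  rw [vecMul_eq_sum, det_updateRow_sum, smul_eq_mul]

theorem det_inv_updateRow_mul_det {A : Matrix n n R} (hA : IsUnit A.det) (i : n) (b : n → R) :
    (A⁻¹.updateRow i b).det * A.det = (b ᵥ* A) i := by
  have hb : (b ᵥ* A) ᵥ* A⁻¹ = b := by
    rw [vecMul_vecMul, mul_nonsing_inv A hA, vecMul_one]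
  calc (A⁻¹.updateRow i b).det * A.det
      = (A⁻¹.updateRow i ((b ᵥ* A) ᵥ* A⁻¹)).det * A.det := by rw [hb]
    _ = (b ᵥ* A) i * (A⁻¹.det * A.det) := by rw [det_updateRow_vecMul, mul_assoc]
    _ = (b ᵥ* A) i := by rw [det_nonsing_inv_mul_det A hA, mul_one]

theorem detP2_eq_s55_general {μm μp S : Matrix n n R} {d : n → R} (hμm : IsUnit μm.det)
    (hμp : IsUnit μp.det) (hrel : μm * diagonal d = μp * diagonal d * S) {i : n}
    (hd : IsLeftRegular (d i)) :
    (μm⁻¹.updateRow i (μp⁻¹ i)).det * μm.det = S i i := by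
  have hconj : μp⁻¹ * μm * diagonal d = diagonal d * S := by
    rw [Matrix.mul_assoc, hrel, Matrix.mul_assoc, nonsing_inv_mul_cancel_left _ _ hμp]
  calc (μm⁻¹.updateRow i (μp⁻¹ i)).det * μm.det
      = (μp⁻¹ i ᵥ* μm) i := det_inv_updateRow_mul_det hμm i _
    _ = (μp⁻¹ * μm) i i := rfl
    _ = S i i := apply_self_eq_of_mul_diagonal_eq_diagonal_mul hconj hd

end

/-- For Jost solutions related by `μ₋E = μ₊ES`, the matrix `P₂` with rows 1–4 from `μ₋⁻¹`
and row 5 from `μ₊⁻¹` has determinant equal to the `(5,5)` entry of `S`. -/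
theorem detP2_eq_s55 (μm μp : Matrix (Fin 5) (Fin 5) ℂ)
    (hμm : μm.det = 1) (hμp : IsUnit μp.det)
    (d : Fin 5 → ℂ) (hd : ∀ i, d i ≠ 0)
    (S : Matrix (Fin 5) (Fin 5) ℂ)
    (hrel : μm * Matrix.diagonal d = μp * Matrix.diagonal d * S)
    (P₂ : Matrix (Fin 5) (Fin 5) ℂ)
    (hP₂ : P₂ = Matrix.of fun (i j : Fin 5) => if (i : ℕ) < 4 then μm⁻¹ i j else μp⁻¹ i j) :
    P₂.det = S 4 4 := by
  rw [hP₂, of_ite_val_lt_eq_updateRow_last, ← mul_one (det _), ← hμm]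
  exact detP2_eq_s55_general (hμm ▸ isUnit_one) hμp hrel (mul_right_injective₀ (hd _))
end
end

section
/- Let B ∈ M₅(ℂ) be invertible with B = B₄ ⊕ (−1) block-diagonal (i.e., B_{k5} = B_{5k} = 0 for k ≤ 4, B_{55} = −1). Let μ₋, μ₊, ν₋, ν₊ ∈ M₅(ℂ) be invertible and satisfy B⁻¹ ν₋† B = μ₋⁻¹ and B⁻¹ ν₊† B = μ₊⁻¹. Let P₁ be the matrix whose first four columns are the first four columns of ν₋ and whose fifth column is the fifth column of ν₊, and let P₂ be the matrix whose first four rows are the first four rows of μ₋⁻¹ and whose fifth row is the fifth row of μ₊⁻¹. Then P₁† = B P₂ B⁻¹. -/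
open Complex Matrix

noncomputable section

/-!
Conjugate transposition turns columns into rows, so `P₁†` is assembled from rows of the matrices
`ν±† = B μ±⁻¹ B⁻¹`. Right multiplication by `B⁻¹` acts on each row separately, and left
multiplication by the block diagonal matrix `B` only combines rows of the same block, so both
factors can be pulled out of the assembled matrix.
-/

section SelectRows

variable {ι l m n α : Type*}

/-- The matrix assembled from a family `A` by taking row `i` from the member labelled `b i`.
With two labels this is the matrix `P₂` of the Riemann–Hilbert problem. -/
def selectRows (b : m → ι) (A : ι → Matrix m n α) : Matrix m n α :=
  of fun i j => A (b i) i j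

/-- The matrix assembled from a family `A` by taking column `j` from the member labelled `b j`.
With two labels this is the matrix `P₁` of the Riemann–Hilbert problem. -/
def selectCols (b : n → ι) (A : ι → Matrix m n α) : Matrix m n α :=
  of fun i j => A (b j) i j

/-- A square matrix is block diagonal for the labelling `b` if its entries between indices with
different labels vanish; the indices of a block need not be contiguous. -/
def IsBlockDiagonal [Zero α] (b : n → ι) (B : Matrix n n α) : Prop :=
  ∀ ⦃i j⦄, b i ≠ b j → B i j = 0

theorem selectRows_decide (p : m → Prop) [DecidablePred p] (A : Bool → Matrix m n α) :
    selectRows (fun i => decide (p i)) A =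
      of fun i j => if p i then A true i j else A false i j := by
  ext i j
  by_cases hi : p i <;> simp [selectRows, hi]

theorem selectCols_decide (p : n → Prop) [DecidablePred p] (A : Bool → Matrix m n α) :
    selectCols (fun j => decide (p j)) A =
      of fun i j => if p j then A true i j else A false i j := by
  ext i j
  by_cases hj : p j <;> simp [selectCols, hj]

theorem isBlockDiagonal_lt_last_iff [Zero α] {d : ℕ} {B : Matrix (Fin (d + 1)) (Fin (d + 1)) α} :
    IsBlockDiagonal (fun i : Fin (d + 1) => decide ((i : ℕ) < d)) B ↔
      ∀ k : Fin (d + 1), (k : ℕ) < d → B k (Fin.last d) = 0 ∧ B (Fin.last d) k = 0 := by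
  simp only [IsBlockDiagonal, ne_eq, decide_eq_decide]
  constructor
  · exact fun h k hk => ⟨h (by simp [hk]), h (by simp [hk])⟩
  · intro h i j hij
    by_cases hi : (i : ℕ) < d
    · obtain rfl := Fin.eq_last_of_not_lt fun hj => hij (iff_of_true hi hj)
      exact (h i hi).1
    · obtain rfl := Fin.eq_last_of_not_lt hi
      exact (h j (by_contra fun hj => hij (iff_of_false hi hj))).2

theorem conjTranspose_selectCols [Star α] (b : n → ι) (A : ι → Matrix m n α) :
    (selectCols b A)ᴴ = selectRows b fun c => (A c)ᴴ :=
  rfl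

theorem selectRows_mul [Fintype m] [NonUnitalNonAssocSemiring α] (b : l → ι)
    (A : ι → Matrix l m α) (C : Matrix m n α) :
    selectRows b A * C = selectRows b fun c => A c * C :=
  rfl

theorem IsBlockDiagonal.mul_selectRows [Fintype m] [NonUnitalNonAssocSemiring α] {b : m → ι}
    {B : Matrix m m α} (hB : IsBlockDiagonal b B) (A : ι → Matrix m n α) :
    B * selectRows b A = selectRows b fun c => B * A c := by
  ext i j
  refine Finset.sum_congr rfl fun k _ => ?_
  obtain hik | hik := eq_or_ne (b i) (b k)
  · simp only [selectRows, of_apply, hik]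
  · simp only [hB hik, zero_mul]

end SelectRows

/-- `κ c` stands for the inverse Jost matrix `μ⁻¹` with label `c`. -/
theorem P1_P2_symmetry_general {ι n R : Type*} [Fintype n] [DecidableEq n] [CommRing R] [Star R]
    {b : n → ι} {B : Matrix n n R} (hB : IsUnit B.det) (hblock : IsBlockDiagonal b B)
    {ν κ : ι → Matrix n n R} (hνκ : ∀ c, B⁻¹ * (ν c)ᴴ * B = κ c) :
    (selectCols b ν)ᴴ = B * selectRows b κ * B⁻¹ := by
  have hν (c : ι) : (ν c)ᴴ = B * κ c * B⁻¹ := by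
    rw [← hνκ, Matrix.mul_assoc B⁻¹, mul_nonsing_inv_cancel_left _ _ hB,
      mul_nonsing_inv_cancel_right _ _ hB]
  calc
    (selectCols b ν)ᴴ = selectRows b fun c => (ν c)ᴴ := conjTranspose_selectCols b ν
    _ = selectRows b fun c => B * κ c * B⁻¹ := by simp only [hν]
    _ = (selectRows b fun c => B * κ c) * B⁻¹ := (selectRows_mul b _ _).symm
    _ = B * selectRows b κ * B⁻¹ := by rw [hblock.mul_selectRows]

/-- The symmetry `P₁† = B P₂ B⁻¹` between the two sectionally analytic matrices of the
Riemann–Hilbert problem. -/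
theorem P1_P2_symmetry
    (B : Matrix (Fin 5) (Fin 5) ℂ) (hB : IsUnit B.det)
    (hBblock : ∀ k : Fin 5, (k : ℕ) < 4 → B k 4 = 0 ∧ B 4 k = 0)
    (hB55 : B 4 4 = -1)
    (μm μp νm νp : Matrix (Fin 5) (Fin 5) ℂ)
    (hμm : IsUnit μm.det) (hμp : IsUnit μp.det)
    (hνm : IsUnit νm.det) (hνp : IsUnit νp.det)
    (hm : B⁻¹ * νmᴴ * B = μm⁻¹) (hp : B⁻¹ * νpᴴ * B = μp⁻¹)
    (P₁ P₂ : Matrix (Fin 5) (Fin 5) ℂ)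
    (hP₁ : P₁ = Matrix.of fun (i j : Fin 5) => if (j : ℕ) < 4 then νm i j else νp i j)
    (hP₂ : P₂ = Matrix.of fun (i j : Fin 5) => if (i : ℕ) < 4 then μm⁻¹ i j else μp⁻¹ i j) :
    P₁ᴴ = B * P₂ * B⁻¹ := by
  simpa only [hP₁, hP₂, selectCols_decide, selectRows_decide, cond_true, cond_false] using
    P1_P2_symmetry_general (ν := (cond · νm νp)) (κ := (cond · μm⁻¹ μp⁻¹)) hB
      (isBlockDiagonal_lt_last_iff.2 hBblock) (Bool.forall_bool.2 ⟨hp, hm⟩)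
end
end
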